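/- Let G be a finite group with trivial Fitting subgroup, let E = M_1 × ⋯ × M_k be the socle of G, the internal direct product of the (necessarily non-abelian) minimal normal subgroups M_1, …, M_k of G, and for each j let V_j be the product of all M_ℓ with ℓ ≠ j. Suppose that for each j there is an irreducible character λ_j of M_j such that the character λ_j × 1_{V_j} of E has an extension λ̂_j to the subgroup I = ⋂_{s=1}^k I_G(λ_s). Then the pointwise product ψ = ∏_{s=1}^k λ̂_s is an irreducible character of I extending λ = λ_1 × ⋯ × λ_k ∈ Irr(E), and I = I_G(λ). -/

import Mathlib

open scoped MatrixGroups

noncomputable section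

/-- `χ` is the character of some irreducible complex representation of `G`. -/
def IsIrrChar (G : Type) [Group G] (χ : G → ℂ) : Prop :=
  ∃ V : FDRep ℂ G, CategoryTheory.Simple V ∧ ∀ g : G, FDRep.character V g = χ g

/-- `α : S → ℂ` has an extension to `Aut S`, through the embedding of `S` in `Aut S`
given by inner automorphisms. -/
def ExtendsToAut (S : Type) [Group S] (α : S → ℂ) : Prop :=
  ∃ ψ : MulAut S → ℂ, IsIrrChar (MulAut S) ψ ∧ ∀ s : S, ψ (MulAut.conj s) = α s

/-- The inertia subgroup `I_G(λ)` of a (character) `lam : M → ℂ` of a normal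
subgroup `M` of `G`: the set of `g ∈ G` with `lam ∘ (conjugation by g) = lam`. -/
def inertia {G : Type} [Group G] (M : Subgroup G) (hM : M.Normal) (lam : ↥M → ℂ) :
    Subgroup G where
  carrier := {g : G | ∀ m : ↥M, lam ⟨g * m * g⁻¹, hM.conj_mem m.1 m.2 g⟩ = lam m}
  one_mem' := by
    intro m
    have : ((1 : G) * m * (1 : G)⁻¹) = (m : G) := by group
    exact congrArg lam (Subtype.ext this)
  mul_mem' := by
    intro a b ha hb m
    have key : ∀ (x y : G) (hx : x ∈ M) (hy : y ∈ M), x = y →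
        lam ⟨x, hx⟩ = lam ⟨y, hy⟩ := by
      rintro x y hx hy rfl; rfl
    have h1 := ha ⟨b * m * b⁻¹, hM.conj_mem m.1 m.2 b⟩
    have h2 := hb m
    calc lam ⟨(a * b) * m * (a * b)⁻¹, hM.conj_mem m.1 m.2 (a * b)⟩
        = lam ⟨a * (b * m * b⁻¹) * a⁻¹, hM.conj_mem _ (hM.conj_mem m.1 m.2 b) a⟩ :=
          key _ _ _ _ (by group)
      _ = lam ⟨b * m * b⁻¹, hM.conj_mem m.1 m.2 b⟩ := h1
      _ = lam m := h2
  inv_mem' := by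
    intro a ha m
    have key : ∀ (x y : G) (hx : x ∈ M) (hy : y ∈ M), x = y →
        lam ⟨x, hx⟩ = lam ⟨y, hy⟩ := by
      rintro x y hx hy rfl; rfl
    have h := ha ⟨a⁻¹ * m * (a⁻¹)⁻¹, hM.conj_mem _ m.2 a⁻¹⟩
    have h2 : lam ⟨a * (a⁻¹ * m * (a⁻¹)⁻¹) * a⁻¹,
        hM.conj_mem _ (hM.conj_mem m.1 m.2 a⁻¹) a⟩ = lam m :=
      key _ _ _ _ (by group)
    exact h.symm.trans h2

/-- A (character) `lam : M → ℂ` of a subgroup `M` of `G` has an extension to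
the subgroup `H` of `G`: some irreducible character of `H` restricts to `lam`. -/
def ExtendsToSubgroup {G : Type} [Group G] (M H : Subgroup G) (lam : ↥M → ℂ) : Prop :=
  ∃ ψ : ↥H → ℂ, IsIrrChar ↥H ψ ∧
    ∀ (x : G) (hxM : x ∈ M) (hxH : x ∈ H), ψ ⟨x, hxH⟩ = lam ⟨x, hxM⟩

/-!
Restricting `∏ j, λ̂ j` along the multiplication map `∏ j, M j → I` gives the external product
`∏ j, λ j`, whose norm is the product of the norms of the `λ j`; it is therefore irreducible, and a
character with an irreducible restriction is itself irreducible. For the inertia groups,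
conjugation acts on `M₁ ⋯ M_k` factor by factor, so `I` fixes `Λ`; conversely `Λ` restricts to
`M j` as a nonzero multiple of `λ j`, so whatever fixes `Λ` fixes each `λ j`.
-/

open CategoryTheory MonoidalCategory

theorem simple_of_simple_obj {C D : Type*} [Category* C] [Category* D]
    [Limits.HasZeroMorphisms C] [Limits.HasZeroMorphisms D] (F : C ⥤ D)
    [F.PreservesZeroMorphisms] [F.Faithful] [F.PreservesMonomorphisms] [F.ReflectsIsomorphisms]
    (X : C) [Simple (F.obj X)] : Simple X where
  mono_isIso_iff_nonzero f _ := by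
    rw [← isIso_iff_of_reflects_iso f F, Simple.mono_isIso_iff_nonzero, Ne, F.map_eq_zero_iff]

section Restriction

variable (C : Type*) [Category* C] {K H : Type*} [Monoid K] [Monoid H] (f : K →* H)

instance action_res_reflectsIsomorphisms : (Action.res C f).ReflectsIsomorphisms where
  reflects φ _ := by
    have : IsIso φ.hom :=
      inferInstanceAs (IsIso ((Action.forget C K).map ((Action.res C f).map φ)))
    exact Action.isIso_of_hom_isIso φ

instance action_res_preservesMonomorphisms [Limits.HasPullbacks C] :
    (Action.res C f).PreservesMonomorphisms where
  preserves φ _ := by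
    have : Mono ((Action.forget C K).map ((Action.res C f).map φ)) :=
      inferInstanceAs (Mono ((Action.forget C H).map φ))
    exact (Action.forget C K).mono_of_mono_map this

end Restriction

/-- `χ` is the character of some finite-dimensional complex representation of `G`, irreducible or
not; in particular the zero function is a character. -/
def IsChar (G : Type) [Group G] (χ : G → ℂ) : Prop :=
  ∃ V : FDRep ℂ G, V.character = χ

namespace IsChar

variable {G K : Type} [Group G] [Group K] {χ θ : G → ℂ}

theorem apply_conj (hχ : IsChar G χ) (g h : G) : χ (g * h * g⁻¹) = χ h := by
  obtain ⟨V, rfl⟩ := hχ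
  exact V.char_conj h g

theorem one : IsChar G 1 :=
  ⟨FDRep.of (1 : G →* (ℂ →ₗ[ℂ] ℂ)), by ext; simp [FDRep.character]⟩

theorem mul (hχ : IsChar G χ) (hθ : IsChar G θ) : IsChar G (χ * θ) := by
  obtain ⟨V, rfl⟩ := hχ
  obtain ⟨W, rfl⟩ := hθ
  exact ⟨V ⊗ W, FDRep.char_tensor V W⟩

theorem prod {ι : Type*} {s : Finset ι} {χ : ι → G → ℂ} (hχ : ∀ j ∈ s, IsChar G (χ j)) :
    IsChar G (fun g => ∏ j ∈ s, χ j g) := by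
  simpa only [Finset.prod_fn] using
    Finset.prod_induction χ (IsChar G) (fun _ _ => mul) one hχ

theorem comp (hχ : IsChar G χ) (f : K →* G) : IsChar K (χ ∘ f) := by
  obtain ⟨V, rfl⟩ := hχ
  exact ⟨(Action.res (FGModuleCat ℂ) f).obj V, rfl⟩

end IsChar

namespace IsIrrChar

variable {G K : Type} [Group G] [Group K] {χ : G → ℂ}

theorem isChar (hχ : IsIrrChar G χ) : IsChar G χ := by
  obtain ⟨V, -, hV⟩ := hχ
  exact ⟨V, funext hV⟩

theorem apply_one_ne_zero (hχ : IsIrrChar G χ) : χ 1 ≠ 0 := by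
  obtain ⟨V, _, hV⟩ := hχ
  rw [← hV, FDRep.char_one, Nat.cast_ne_zero]
  intro hrank
  have : Subsingleton V := Module.finrank_zero_iff.1 hrank
  refine id_nonzero V (Action.Hom.ext ?_)
  ext v
  exact Subsingleton.elim (α := V) _ _

theorem iff_isChar_and_sum_eq_card [Fintype G] :
    IsIrrChar G χ ↔ IsChar G χ ∧ ∑ g, χ g * χ g⁻¹ = Fintype.card G := by
  rw [Fintype.card_eq_nat_card]
  constructor
  · rintro ⟨V, hV, hVχ⟩
    obtain rfl : V.character = χ := funext hVχ
    exact ⟨⟨V, rfl⟩, (FDRep.simple_iff_char_is_norm_one V).1 hV⟩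
  · rintro ⟨⟨V, rfl⟩, hnorm⟩
    exact ⟨V, (FDRep.simple_iff_char_is_norm_one V).2 hnorm, fun _ => rfl⟩

theorem simple_of_character [Finite G] {V : FDRep ℂ G} (hV : IsIrrChar G V.character) :
    Simple V := by
  have := Fintype.ofFinite G
  rw [FDRep.simple_iff_char_is_norm_one, (iff_isChar_and_sum_eq_card.1 hV).2,
    Fintype.card_eq_nat_card]

theorem of_comp [Finite K] (f : K →* G) (hχ : IsChar G χ) (hχf : IsIrrChar K (χ ∘ f)) :
    IsIrrChar G χ := by
  obtain ⟨V, rfl⟩ := hχ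
  have : Simple ((Action.res (FGModuleCat ℂ) f).obj V) := simple_of_character hχf
  exact ⟨V, simple_of_simple_obj (Action.res (FGModuleCat ℂ) f) V, fun _ => rfl⟩

theorem pi {ι : Type} [Fintype ι] {N : ι → Type} [∀ j, Group (N j)] [∀ j, Finite (N j)]
    {χ : ∀ j, N j → ℂ} (hχ : ∀ j, IsIrrChar (N j) (χ j)) :
    IsIrrChar (∀ j, N j) (fun x => ∏ j, χ j (x j)) := by
  classical
  have := fun j => Fintype.ofFinite (N j)
  refine iff_isChar_and_sum_eq_card.2 ⟨?_, ?_⟩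
  · exact IsChar.prod fun j _ => (hχ j).isChar.comp (Pi.evalMonoidHom N j)
  · calc ∑ x : ∀ j, N j, (∏ j, χ j (x j)) * ∏ j, χ j (x⁻¹ j)
        = ∑ x : ∀ j, N j, ∏ j, χ j (x j) * χ j (x j)⁻¹ := by
          simp only [Finset.prod_mul_distrib, Pi.inv_apply]
      _ = ∏ j, ∑ y, χ j y * χ j y⁻¹ :=
          (Fintype.prod_sum fun j (y : N j) => χ j y * χ j y⁻¹).symm
      _ = ∏ j, (Fintype.card (N j) : ℂ) :=
          Finset.prod_congr rfl fun j _ => (iff_isChar_and_sum_eq_card.1 (hχ j)).2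
      _ = Fintype.card (∀ j, N j) := by rw [Fintype.card_pi, Nat.cast_prod]

end IsIrrChar

section Inertia

variable {G : Type} [Group G]

theorem le_inertia_of_isChar {M : Subgroup G} (hM : M.Normal) {lam : M → ℂ}
    (hlam : IsChar M lam) : M ≤ inertia M hM lam :=
  fun x hx m => hlam.apply_conj ⟨x, hx⟩ m

theorem centralizer_le_inertia {M : Subgroup G} (hM : M.Normal) (lam : M → ℂ) :
    Subgroup.centralizer M ≤ inertia M hM lam := by
  intro x hx m
  have hconj : x * m * x⁻¹ = m := by rw [← hx m m.2, mul_inv_cancel_right]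
  simp only [hconj]

variable {ι : Type*} [Fintype ι] {M : ι → Subgroup G} (hM : ∀ j, (M j).Normal)
  (hcomm : Pairwise fun i j => ∀ x y : G, x ∈ M i → y ∈ M j → Commute x y)

theorem noncommPiCoprod_range_le_iInf_inertia {lam : ∀ j, M j → ℂ}
    (hlam : ∀ j, IsChar (M j) (lam j)) :
    (Subgroup.noncommPiCoprod hcomm).range ≤ ⨅ j, inertia (M j) (hM j) (lam j) := by
  rw [Subgroup.noncommPiCoprod_range]
  refine iSup_le fun i => le_iInf fun j => ?_
  obtain rfl | hij := eq_or_ne i j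
  · exact le_inertia_of_isChar (hM i) (hlam i)
  · have hcent : M i ≤ Subgroup.centralizer (M j) := fun x hx y hy => (hcomm hij x y hx hy).symm
    exact hcent.trans (centralizer_le_inertia (hM j) (lam j))

theorem conj_noncommPiCoprod (g : G) (x : ∀ j, M j) :
    g * Subgroup.noncommPiCoprod hcomm x * g⁻¹ =
      Subgroup.noncommPiCoprod hcomm fun j => ⟨g * x j * g⁻¹, (hM j).conj_mem _ (x j).2 g⟩ := by
  rw [Subgroup.noncommPiCoprod_apply, Subgroup.noncommPiCoprod_apply]
  exact Finset.map_noncommProd Finset.univ (fun j => (x j : G))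
    (fun i _ j _ hij => hcomm hij _ _ (x i).2 (x j).2) (MulAut.conj g)

variable {E : Subgroup G} {lam : ∀ j, M j → ℂ} {Λ : E → ℂ}

theorem apply_eq_mul_prod_apply_one [DecidableEq ι]
    (hΛ : ∀ (x : ∀ j, M j) (hx : Subgroup.noncommPiCoprod hcomm x ∈ E),
      Λ ⟨Subgroup.noncommPiCoprod hcomm x, hx⟩ = ∏ j, lam j (x j))
    (j : ι) {m : G} (hm : m ∈ M j) (hmE : m ∈ E) :
    Λ ⟨m, hmE⟩ = lam j ⟨m, hm⟩ * ∏ i ∈ Finset.univ.erase j, lam i 1 := by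
  have hsingle : Subgroup.noncommPiCoprod hcomm (Pi.mulSingle j ⟨m, hm⟩) = m :=
    Subgroup.noncommPiCoprod_mulSingle j ⟨m, hm⟩
  have hΛm := hΛ (Pi.mulSingle j ⟨m, hm⟩) (hsingle.symm ▸ hmE)
  simp only [hsingle] at hΛm
  rw [hΛm, ← Finset.mul_prod_erase _ _ (Finset.mem_univ j), Pi.mulSingle_eq_same]
  congr 1
  refine Finset.prod_congr rfl fun i hi => ?_
  rw [Pi.mulSingle_eq_of_ne (Finset.ne_of_mem_erase hi)]

theorem iInf_inertia_le_inertia (hE : E.Normal)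
    (hrange : (Subgroup.noncommPiCoprod hcomm).range = E)
    (hΛ : ∀ (x : ∀ j, M j) (hx : Subgroup.noncommPiCoprod hcomm x ∈ E),
      Λ ⟨Subgroup.noncommPiCoprod hcomm x, hx⟩ = ∏ j, lam j (x j)) :
    ⨅ j, inertia (M j) (hM j) (lam j) ≤ inertia E hE Λ := by
  rintro g hg ⟨e, he⟩
  obtain ⟨x, rfl⟩ := hrange.symm ▸ he
  simp only [conj_noncommPiCoprod hM, hΛ]
  exact Finset.prod_congr rfl fun j _ => Subgroup.mem_iInf.1 hg j (x j)

theorem inertia_le_iInf_inertia (hE : E.Normal)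
    (hrange : (Subgroup.noncommPiCoprod hcomm).range = E)
    (hΛ : ∀ (x : ∀ j, M j) (hx : Subgroup.noncommPiCoprod hcomm x ∈ E),
      Λ ⟨Subgroup.noncommPiCoprod hcomm x, hx⟩ = ∏ j, lam j (x j))
    (hlam : ∀ j, lam j 1 ≠ 0) :
    inertia E hE Λ ≤ ⨅ j, inertia (M j) (hM j) (lam j) := by
  classical
  intro g hg
  refine Subgroup.mem_iInf.2 fun j m => ?_
  have hmE : (m : G) ∈ E :=
    hrange ▸ ⟨Pi.mulSingle j m, Subgroup.noncommPiCoprod_mulSingle j m⟩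
  have hfix := hg ⟨m, hmE⟩
  rw [apply_eq_mul_prod_apply_one hcomm hΛ j ((hM j).conj_mem m m.2 g),
    apply_eq_mul_prod_apply_one hcomm hΛ j m.2] at hfix
  exact mul_right_cancel₀ (Finset.prod_ne_zero_iff.2 fun i _ => hlam i) hfix

end Inertia

theorem product_extension_of_socle_characters_general {G : Type} [Group G] {ι : Type} [Fintype ι]
    {M : ι → Subgroup G} [∀ j, Finite (M j)] (hM : ∀ j, (M j).Normal)
    (hcomm : Pairwise fun i j => ∀ x y : G, x ∈ M i → y ∈ M j → Commute x y)
    {E : Subgroup G} (hE : E.Normal) (hrange : (Subgroup.noncommPiCoprod hcomm).range = E)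
    {lam : ∀ j, M j → ℂ} (hlam : ∀ j, IsIrrChar (M j) (lam j))
    {I : Subgroup G} (hI : I = ⨅ j, inertia (M j) (hM j) (lam j))
    {lamhat : ι → I → ℂ} (hlamhat : ∀ j, IsChar I (lamhat j))
    (hres : ∀ (j : ι) (x : ∀ l, M l) (hx : Subgroup.noncommPiCoprod hcomm x ∈ I),
      lamhat j ⟨Subgroup.noncommPiCoprod hcomm x, hx⟩ = lam j (x j))
    {Λ : E → ℂ}
    (hΛ : ∀ (x : ∀ l, M l) (hx : Subgroup.noncommPiCoprod hcomm x ∈ E),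
      Λ ⟨Subgroup.noncommPiCoprod hcomm x, hx⟩ = ∏ j, lam j (x j)) :
    IsIrrChar I (fun a => ∏ j, lamhat j a) ∧
    (∀ (x : G) (hxE : x ∈ E) (hxI : x ∈ I), (∏ j, lamhat j ⟨x, hxI⟩) = Λ ⟨x, hxE⟩) ∧
    inertia E hE Λ = I := by
  have hmem (x : ∀ j, M j) : Subgroup.noncommPiCoprod hcomm x ∈ I :=
    hI ▸ noncommPiCoprod_range_le_iInf_inertia hM hcomm (fun j => (hlam j).isChar) ⟨x, rfl⟩
  refine ⟨?_, ?_, ?_⟩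
  · let f : (∀ j, M j) →* I := (Subgroup.noncommPiCoprod hcomm).codRestrict I hmem
    have hcomp : (fun a => ∏ j, lamhat j a) ∘ f = fun x => ∏ j, lam j (x j) :=
      funext fun x => Finset.prod_congr rfl fun j _ => hres j x (hmem x)
    exact IsIrrChar.of_comp f (IsChar.prod fun j _ => hlamhat j) (hcomp ▸ IsIrrChar.pi hlam)
  · intro x hxE hxI
    obtain ⟨y, rfl⟩ := hrange.symm ▸ hxE
    simp only [hΛ, hres]
  · rw [hI]
    exact le_antisymm
      (inertia_le_iInf_inertia hM hcomm hE hrange hΛ fun j => (hlam j).apply_one_ne_zero)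
      (iInf_inertia_le_inertia hM hcomm hE hrange hΛ)

/-- `G` has trivial Fitting subgroup and socle `E = M₁ × ⋯ × M_k`, an internal direct
product of the minimal normal subgroups of `G`.  If for each `j` the character
`μ j = λ j × 1` of `E` (where `λ j ∈ Irr(M j)`) has an extension `λ̂ j` to
`I = ⋂ⱼ I_G(λ j)`, then `ψ = ∏ⱼ λ̂ j` is an irreducible character of `I` extending
`Λ = λ₁ × ⋯ × λ_k ∈ Irr(E)`, and `I = I_G(Λ)`. -/
theorem product_extension_of_socle_characters (G : Type) [Group G] [Fintype G]
    (hFitting : ∀ N : Subgroup G, N.Normal → Group.IsNilpotent ↥N → N = ⊥)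
    (k : ℕ) (M : Fin k → Subgroup G)
    (hMnorm : ∀ j, (M j).Normal)
    (hMne : ∀ j, M j ≠ ⊥)
    (hMmin : ∀ j, ∀ N : Subgroup G, N.Normal → N ≤ M j → N = ⊥ ∨ N = M j)
    (hMall : ∀ N : Subgroup G, N.Normal → N ≠ ⊥ →
      (∀ N' : Subgroup G, N'.Normal → N' ≤ N → N' = ⊥ ∨ N' = N) → ∃ j, N = M j)
    (E : Subgroup G) (hEn : E.Normal)
    (hcomm : Pairwise fun i j => ∀ x y : G, x ∈ M i → y ∈ M j → Commute x y)
    (hinj : Function.Injective (Subgroup.noncommPiCoprod hcomm))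
    (hrange : (Subgroup.noncommPiCoprod hcomm).range = E)
    (lam : ∀ j, ↥(M j) → ℂ) (hlam : ∀ j, IsIrrChar ↥(M j) (lam j))
    (μ : ∀ _ : Fin k, ↥E → ℂ) (hμirr : ∀ j, IsIrrChar ↥E (μ j))
    (hμ : ∀ (j : Fin k) (x : ∀ l, ↥(M l)) (hx : Subgroup.noncommPiCoprod hcomm x ∈ E),
      μ j ⟨Subgroup.noncommPiCoprod hcomm x, hx⟩ = lam j (x j))
    (I : Subgroup G) (hI : I = ⨅ j, inertia (M j) (hMnorm j) (lam j))
    (lamhat : ∀ _ : Fin k, ↥I → ℂ)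
    (hlamhatirr : ∀ j, IsIrrChar ↥I (lamhat j))
    (hlamhatres : ∀ (j : Fin k) (x : G) (hxE : x ∈ E) (hxI : x ∈ I),
      lamhat j ⟨x, hxI⟩ = μ j ⟨x, hxE⟩)
    (Λ : ↥E → ℂ)
    (hΛ : ∀ (x : ∀ l, ↥(M l)) (hx : Subgroup.noncommPiCoprod hcomm x ∈ E),
      Λ ⟨Subgroup.noncommPiCoprod hcomm x, hx⟩ = ∏ j, lam j (x j)) :
    IsIrrChar ↥I (fun a => ∏ j, lamhat j a) ∧
    (∀ (x : G) (hxE : x ∈ E) (hxI : x ∈ I),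
      (∏ j, lamhat j ⟨x, hxI⟩) = Λ ⟨x, hxE⟩) ∧
    inertia E hEn Λ = I :=
  product_extension_of_socle_characters_general hMnorm hcomm hEn hrange hlam hI
    (fun j => (hlamhatirr j).isChar)
    (fun j x hx => (hlamhatres j _ (hrange ▸ ⟨x, rfl⟩) hx).trans (hμ j x _)) hΛ
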